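/- Let A be a finite distributive nearlattice, L a finite bounded distributive lattice, and e : A → L an injective N-homomorphism such that e[A] is finitely meet-dense in L. For every a ∈ A, the greatest lower bound ⋀{x ∈ At(A) : a ≤ x} exists in A, and in L one has ⋀{z ∈ At(L) : e(a) ≤ z} = e(⋀{x ∈ At(A) : a ≤ x}); that is, π_L ∘ e = e ∘ π_A, where π denotes the map sending an element to the meet of all dual atoms above it (with the empty meet equal to the top element). -/

import Mathlib

/-- In a join-semilattice, any two elements with a common lower bound have a
greatest lower bound. -/
def HasPartialMeets (A : Type*) [SemilatticeSup A] : Prop :=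
  ∀ x y : A, (∃ z, z ≤ x ∧ z ≤ y) → ∃ m, IsGLB ({x, y} : Set A) m

/-- Every principal upset is distributive. -/
def UpsetDistrib (A : Type*) [SemilatticeSup A] : Prop :=
  ∀ a x y z m₁ m₂ m₃ : A, a ≤ x → a ≤ y → a ≤ z →
    IsGLB ({x, y ⊔ z} : Set A) m₁ → IsGLB ({x, y} : Set A) m₂ →
    IsGLB ({x, z} : Set A) m₃ → m₁ = m₂ ⊔ m₃

/-- A dual atom: `a ≠ 1` and `a ≤ x ≤ 1` implies `x = a` or `x = 1`. -/
def DualAtom {A : Type*} [SemilatticeSup A] [OrderTop A] (a : A) : Prop :=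
  a ≠ ⊤ ∧ ∀ x, a ≤ x → x = a ∨ x = ⊤

/-!
Since `L` is the meet-closure of `e[A]`, a dual atom `z` of `L` is a meet of elements of `e[A]`, one
of which is not `⊤` and hence equals `z`. Conversely, an element of `L` strictly above `e x`, with
`x` a dual atom, is a meet of elements `e y` with `x < y`, that is, of copies of `⊤`. So `e` maps
the dual atoms above `a` onto those above `e a`. The former have `a` as a common lower bound, so
their meet can be formed two elements at a time, and `e` preserves each of these binary meets.
-/

/-- Meet-density of the range of `f` in `β`: every element is a greatest lower bound of values of
`f`. Unlike the finite meet-density of the nearlattice setting, infinite and empty meets are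
allowed. -/
def IsMeetDense {α β : Type*} [Preorder β] (f : α → β) : Prop :=
  ∀ u : β, ∃ s : Set α, IsGLB (f '' s) u

theorem isMeetDense_of_forall_exists_eq_inf {α β : Type*} [SemilatticeInf β] [OrderTop β]
    {f : α → β} (h : ∀ u : β, ∃ s : Finset α, u = s.inf f) : IsMeetDense f := by
  intro u
  obtain ⟨s, rfl⟩ := h u
  exact ⟨s, Finset.isGLB_inf⟩

theorem map_le_map_iff_of_injective_of_map_sup {α β : Type*} [SemilatticeSup α]
    [SemilatticeSup β] {f : α → β} (hf : Function.Injective f)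
    (hsup : ∀ a b, f (a ⊔ b) = f a ⊔ f b) {a b : α} : f a ≤ f b ↔ a ≤ b := by
  rw [← sup_eq_right, ← hsup, hf.eq_iff, sup_eq_right]

theorem dualAtom_iff_isCoatom {α : Type*} [SemilatticeSup α] [OrderTop α] {a : α} :
    DualAtom a ↔ IsCoatom a :=
  and_congr_right' <| forall_congr' fun x => by
    rw [le_iff_eq_or_lt]
    grind

section Coatoms

variable {α β : Type*} [PartialOrder α] [OrderTop α] [PartialOrder β] [OrderTop β]
  {f : α ↪o β}

theorem IsMeetDense.isCoatom_map (hf : IsMeetDense f) (htop : f ⊤ = ⊤) {a : α}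
    (ha : IsCoatom a) : IsCoatom (f a) := by
  refine ⟨fun h => ha.ne_top (f.injective (h.trans htop.symm)), fun u hu => ?_⟩
  obtain ⟨s, hs⟩ := hf u
  refine top_le_iff.mp (hs.2 ?_)
  rintro _ ⟨y, hy, rfl⟩
  have hay : a < y := f.lt_iff_lt.mp (hu.trans_le (hs.1 ⟨y, hy, rfl⟩))
  rw [ha.lt_iff.mp hay, htop]

theorem IsMeetDense.exists_isCoatom_map_eq (hf : IsMeetDense f) (htop : f ⊤ = ⊤) {z : β}
    (hz : IsCoatom z) : ∃ a, IsCoatom a ∧ f a = z := by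
  obtain ⟨s, hs⟩ := hf z
  obtain ⟨a, ha, hne⟩ : ∃ a ∈ s, f a ≠ ⊤ := by
    by_contra! h
    refine hz.ne_top (top_le_iff.mp (hs.2 ?_))
    rintro _ ⟨y, hy, rfl⟩
    exact (h y hy).ge
  have haz : f a = z := (hz.le_iff_eq hne).mp (hs.1 ⟨a, ha, rfl⟩)
  exact ⟨a, f.isCoatom_of_map_top_of_image htop (haz ▸ hz), haz⟩

theorem IsMeetDense.image_coatoms_above (hf : IsMeetDense f) (htop : f ⊤ = ⊤) (a : α) :
    f '' {x | IsCoatom x ∧ a ≤ x} = {z | IsCoatom z ∧ f a ≤ z} := by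
  ext z
  constructor
  · rintro ⟨x, ⟨hx, hax⟩, rfl⟩
    exact ⟨hf.isCoatom_map htop hx, f.le_iff_le.mpr hax⟩
  · rintro ⟨hz, haz⟩
    obtain ⟨x, hx, rfl⟩ := hf.exists_isCoatom_map_eq htop hz
    exact ⟨x, ⟨hx, f.le_iff_le.mp haz⟩, rfl⟩

end Coatoms

section FiniteMeets

theorem isGLB_insert_iff_isGLB_pair {α : Type*} [Preorder α] {s : Set α} {x b m : α}
    (hb : IsGLB s b) : IsGLB (insert x s) m ↔ IsGLB {x, b} m :=
  isGLB_congr <| by simp only [lowerBounds_insert, lowerBounds_singleton, hb.lowerBounds_eq]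

variable {α : Type*} [SemilatticeSup α] [OrderTop α]

theorem HasPartialMeets.exists_isGLB (hα : HasPartialMeets α) {s : Set α} (hs : s.Finite)
    (hbdd : BddBelow s) : ∃ b, IsGLB s b := by
  induction s, hs using Set.Finite.induction_on with
  | empty => exact ⟨⊤, isGLB_empty⟩
  | @insert x s _ _ ih =>
    obtain ⟨a, ha⟩ := hbdd
    rw [lowerBounds_insert] at ha
    obtain ⟨b, hb⟩ := ih ⟨a, ha.2⟩
    obtain ⟨m, hm⟩ := hα x b ⟨a, ha.1, hb.2 ha.2⟩
    exact ⟨m, (isGLB_insert_iff_isGLB_pair hb).mpr hm⟩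

theorem HasPartialMeets.isGLB_image {β : Type*} [Preorder β] [OrderTop β]
    (hα : HasPartialMeets α) {f : α → β} (htop : f ⊤ = ⊤)
    (hpair : ∀ a b m, IsGLB {a, b} m → IsGLB {f a, f b} (f m))
    {s : Set α} (hs : s.Finite) {b : α} (hb : IsGLB s b) : IsGLB (f '' s) (f b) := by
  induction s, hs using Set.Finite.induction_on generalizing b with
  | empty =>
    obtain rfl : b = ⊤ := hb.unique isGLB_empty
    rw [htop, Set.image_empty]
    exact isGLB_empty
  | @insert x s _ hs ih =>
    obtain ⟨c, hc⟩ := hα.exists_isGLB hs (hb.bddBelow.mono (Set.subset_insert x s))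
    rw [Set.image_insert_eq, isGLB_insert_iff_isGLB_pair (ih hc)]
    exact hpair x c b ((isGLB_insert_iff_isGLB_pair hc).mp hb)

end FiniteMeets

theorem pi_commutes_with_free_extension_general {A L : Type*}
    [SemilatticeSup A] [OrderTop A] [PartialOrder L] [OrderTop L]
    (hm : HasPartialMeets A) (e : A ↪o L) (htop : e ⊤ = ⊤)
    (hinf : ∀ a b m : A, IsGLB {a, b} m → IsGLB {e a, e b} (e m))
    (hdense : IsMeetDense e) (a : A) (hfin : {x : A | IsCoatom x ∧ a ≤ x}.Finite) :
    ∃ b : A, IsGLB {x : A | IsCoatom x ∧ a ≤ x} b ∧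
      IsGLB {z : L | IsCoatom z ∧ e a ≤ z} (e b) := by
  obtain ⟨b, hb⟩ := hm.exists_isGLB hfin ⟨a, fun _ hx => hx.2⟩
  refine ⟨b, hb, ?_⟩
  rw [← hdense.image_coatoms_above htop a]
  exact hm.isGLB_image htop hinf hfin hb

/-- with `A` a finite distributive nearlattice embedded via `e` in
a finite bounded distributive lattice `L` (injective, finitely meet-dense
N-homomorphism), for every `a ∈ A` the meet `⋀{x ∈ At(A) : a ≤ x}` exists in
`A`, and `⋀{z ∈ At(L) : e(a) ≤ z} = e(⋀{x ∈ At(A) : a ≤ x})`; that is,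
`π_L ∘ e = e ∘ π_A`. -/
theorem pi_commutes_with_free_extension {A L : Type*}
    [SemilatticeSup A] [OrderTop A] [Finite A]
    [DistribLattice L] [BoundedOrder L] [Finite L]
    (hm : HasPartialMeets A) (hd : UpsetDistrib A)
    (e : A → L) (hinj : Function.Injective e)
    (htop : e ⊤ = ⊤)
    (hsup : ∀ a b : A, e (a ⊔ b) = e a ⊔ e b)
    (hinf : ∀ a b m : A, IsGLB ({a, b} : Set A) m → e m = e a ⊓ e b)
    (hdense : ∀ u : L, ∃ s : Finset A, s.Nonempty ∧ u = s.inf e) :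
    ∀ a : A, ∃ b : A, IsGLB {x : A | DualAtom x ∧ a ≤ x} b ∧
      IsGLB {z : L | DualAtom z ∧ e a ≤ z} (e b) := by
  intro a
  let f : A ↪o L := .ofMapLEIff e fun _ _ => map_le_map_iff_of_injective_of_map_sup hinj hsup
  have hf : IsMeetDense f :=
    isMeetDense_of_forall_exists_eq_inf fun u => (hdense u).imp fun _ hs => hs.2
  have hpair (x y m : A) (h : IsGLB {x, y} m) : IsGLB {e x, e y} (e m) :=
    hinf x y m h ▸ isGLB_pair
  simp only [dualAtom_iff_isCoatom]
  exact pi_commutes_with_free_extension_general hm f htop hpair hf a (Set.toFinite _)
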